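/- The series identity ∑_{n≥1} (−1/27)^n · ((1)_n)^2 / ((1/3)_n (2/3)_n) · (3 − 18n + 28n²)/(n⁴ (2n−1)³) = −π⁴/45 holds. -/

import Mathlib

/-- The rising factorial (Pochhammer symbol) `(a)ₙ = a(a+1)⋯(a+n-1)`. -/
noncomputable def risingFactorial (a : ℝ) (n : ℕ) : ℝ :=
  ∏ i ∈ Finset.range n, (a + i)

/-!
Let `wₙ = (-1/27)ⁿ (1)ₙ² / ((1/3)ₙ (2/3)ₙ)` and let `B` be the beta function. The kernel
`wₙ B(2n+1, k+1)³` times a rational function is the companion `G` of a Wilf–Zeilberger pair whose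
`F` is the kernel itself. The factor `h(n, k) = (H_{n+k+1} - H_n) - (H_{2n+k+1} - H_{2n})` changes
by a rational function in either direction, so multiplying both members by `h` leaves only a
rational defect, which rational multiples of the kernel repair. Summing the resulting pair over the
quadrant gives `∑ₙ G(n, 0) = ∑ₖ F(0, k) = -½ ∑ₖ 1/(k+1)⁴ = -π⁴/180`, and `4 G(n, 0)` is the summand
of the theorem.
-/

open Filter Topology ProbabilityTheory

/-- A Wilf–Zeilberger pair: the difference of `F` in its first variable is the difference of `G` in
its second one. -/
def IsWZPair {M : Type*} [AddCommGroup M] (F G : ℕ → ℕ → M) : Prop :=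
  ∀ n k, F (n + 1) k - F n k = G n (k + 1) - G n k

namespace IsWZPair

variable {M : Type*} [AddCommGroup M] {F G : ℕ → ℕ → M}

lemma tsum_sub_tsum_succ [TopologicalSpace M] [IsTopologicalAddGroup M] [T2Space M]
    (h : IsWZPair F G) (hF : ∀ n, Summable (F n)) (hG : ∀ n, Tendsto (G n) atTop (𝓝 0)) (n : ℕ) :
    ∑' k, F n k - ∑' k, F (n + 1) k = G n 0 := by
  have hsum := ((hF (n + 1)).hasSum.sub (hF n).hasSum).tendsto_sum_nat
  simp only [h n, Finset.sum_range_sub] at hsum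
  have hlim := tendsto_nhds_unique hsum ((hG n).sub_const (G n 0))
  rw [← neg_sub, hlim, zero_sub, neg_neg]

theorem hasSum [UniformSpace M] [IsUniformAddGroup M] [CompleteSpace M] [T2Space M]
    (h : IsWZPair F G) (hF : Summable fun p : ℕ × ℕ => F p.1 p.2)
    (hG : ∀ n, Tendsto (G n) atTop (𝓝 0)) :
    HasSum (fun n => G n 0) (∑' k, F 0 k) := by
  have hrow := hF.prod.hasSum
  have hdiff := hrow.sub ((hasSum_nat_add_iff' 1).2 hrow)
  simpa [h.tsum_sub_tsum_succ hF.prod_factor hG] using hdiff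

lemma mul_add {R : Type*} [CommRing R] {f g : ℕ → ℕ → R} (h : IsWZPair f g) {u P Q : ℕ → ℕ → R}
    (hPQ : ∀ n k, f (n + 1) k * (u (n + 1) k - u n k) + (P (n + 1) k - P n k) =
      g n (k + 1) * (u n (k + 1) - u n k) + (Q n (k + 1) - Q n k)) :
    IsWZPair (fun n k => f n k * u n k + P n k) fun n k => g n k * u n k + Q n k := fun n k => by
  linear_combination u n k * h n k + hPQ n k

end IsWZPair

lemma risingFactorial_pos {a : ℝ} (ha : 0 < a) (n : ℕ) : 0 < risingFactorial a n :=
  Finset.prod_pos fun i _ => by positivity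

lemma risingFactorial_succ (a : ℝ) (n : ℕ) :
    risingFactorial a (n + 1) = risingFactorial a n * (a + n) :=
  Finset.prod_range_succ _ _

section Beta

variable {α β : ℝ}

lemma beta_comm (α β : ℝ) : beta α β = beta β α := by
  rw [beta, beta, mul_comm, add_comm]

lemma beta_add_one_left (hα : 0 < α) (hβ : 0 < β) :
    beta (α + 1) β = beta α β * (α / (α + β)) := by
  rw [beta, beta, add_right_comm, Real.Gamma_add_one hα.ne', Real.Gamma_add_one (by positivity),
    mul_comm α, mul_right_comm, mul_comm (α + β), mul_div_mul_comm]

lemma beta_add_one_right (hα : 0 < α) (hβ : 0 < β) :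
    beta α (β + 1) = beta α β * (β / (α + β)) := by
  rw [beta_comm, beta_add_one_left hβ hα, beta_comm, add_comm β]

lemma beta_one_left (hβ : 0 < β) : beta 1 β = 1 / β := by
  have hΓ : Real.Gamma β ≠ 0 := (Real.Gamma_pos_of_pos hβ).ne'
  rw [beta, add_comm, Real.Gamma_add_one hβ.ne', Real.Gamma_one]
  field_simp

lemma beta_natCast_add_one_le (m : ℕ) (hβ : 0 < β) : beta (m + 1) β ≤ 1 / β := by
  induction m with
  | zero => rw [Nat.cast_zero, zero_add, beta_one_left hβ]
  | succ m ih =>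
    have hm : (0 : ℝ) < m + 1 := by positivity
    rw [Nat.cast_succ, beta_add_one_left hm hβ]
    refine (mul_le_of_le_one_right (beta_pos hm hβ).le ?_).trans ih
    exact div_le_one_of_le₀ (by linarith) (by positivity)

end Beta

/-- The gap `H_{n+k} - H_n` between two harmonic numbers. -/
noncomputable def harmonicGap (n k : ℕ) : ℝ :=
  (harmonic (n + k) - harmonic n : ℚ)

lemma harmonicGap_zero_right (n : ℕ) : harmonicGap n 0 = 0 := by simp [harmonicGap]

lemma harmonicGap_succ_right (n k : ℕ) :
    harmonicGap n (k + 1) = harmonicGap n k + 1 / ((n : ℝ) + k + 1) := by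
  simp only [harmonicGap, ← add_assoc, harmonic_succ]
  push_cast
  ring

lemma harmonicGap_succ_left (n k : ℕ) :
    harmonicGap (n + 1) k = harmonicGap n k + (1 / ((n : ℝ) + k + 1) - 1 / ((n : ℝ) + 1)) := by
  simp only [harmonicGap, add_right_comm n 1 k, harmonic_succ]
  push_cast
  ring

lemma harmonicGap_nonneg (n k : ℕ) : 0 ≤ harmonicGap n k := by
  induction k with
  | zero => rw [harmonicGap_zero_right]
  | succ k ih =>
    rw [harmonicGap_succ_right]
    positivity

lemma harmonicGap_le (n k : ℕ) : harmonicGap n k ≤ k := by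
  induction k with
  | zero => rw [harmonicGap_zero_right, Nat.cast_zero]
  | succ k ih =>
    have hstep : 1 / ((n : ℝ) + k + 1) ≤ 1 :=
      div_le_one_of_le₀ (by linarith [n.cast_nonneg (α := ℝ), k.cast_nonneg (α := ℝ)])
        (by positivity)
    rw [harmonicGap_succ_right, Nat.cast_succ]
    exact add_le_add ih hstep

namespace PiFourSeries

/-- The weight `wₙ = (-1/27)ⁿ (1)ₙ² / ((1/3)ₙ (2/3)ₙ)`. -/
noncomputable def weight (n : ℕ) : ℝ :=
  (-1 / 27 : ℝ) ^ n * (risingFactorial 1 n) ^ 2 /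
    (risingFactorial (1 / 3) n * risingFactorial (2 / 3) n)

lemma weight_zero : weight 0 = 1 := by simp [weight, risingFactorial]

lemma weight_succ (n : ℕ) :
    weight (n + 1) =
      weight n * (-((n : ℝ) + 1) ^ 2 / (3 * (3 * (n : ℝ) + 1) * (3 * (n : ℝ) + 2))) := by
  have hthird := (risingFactorial_pos (a := 1 / 3) (by norm_num) n).ne'
  have htwo_thirds := (risingFactorial_pos (a := 2 / 3) (by norm_num) n).ne'
  simp only [weight, risingFactorial_succ, pow_succ]
  field_simp
  ring

lemma abs_weight_le (n : ℕ) : |weight n| ≤ (1 / 2) ^ n := by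
  induction n with
  | zero => simp [weight_zero]
  | succ n ih =>
    rw [weight_succ, abs_mul, pow_succ (1 / 2 : ℝ) n]
    refine mul_le_mul ih ?_ (abs_nonneg _) (by positivity)
    rw [neg_div, abs_neg, abs_of_nonneg (by positivity), div_le_div_iff₀ (by positivity) two_pos]
    nlinarith [n.cast_nonneg (α := ℝ)]

/-- The kernel `wₙ B(2n+1, k+1)³`, where `B(2n+1, k+1) = (2n)! k! / (2n+k+1)!`. -/
noncomputable def kernel (n k : ℕ) : ℝ :=
  weight n * beta (2 * n + 1) (k + 1) ^ 3

lemma kernel_zero_left (k : ℕ) : kernel 0 k = 1 / ((k : ℝ) + 1) ^ 3 := by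
  rw [kernel, weight_zero, Nat.cast_zero, mul_zero, zero_add, beta_one_left (by positivity),
    one_mul, one_div_pow]

lemma kernel_succ_left (n k : ℕ) :
    kernel (n + 1) k = kernel n k *
      (-((n : ℝ) + 1) ^ 2 / (3 * (3 * n + 1) * (3 * n + 2)) *
        ((2 * n + 1) * (2 * n + 2) / ((2 * n + k + 2) * (2 * n + k + 3))) ^ 3) := by
  have harg : 2 * ((n + 1 : ℕ) : ℝ) + 1 = 2 * n + 1 + 1 + 1 := by
    push_cast
    ring
  rw [kernel, kernel, weight_succ, harg, beta_add_one_left (by positivity) (by positivity),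
    beta_add_one_left (by positivity) (by positivity)]
  field_simp
  ring

lemma kernel_succ_right (n k : ℕ) :
    kernel n (k + 1) = kernel n k * (((k : ℝ) + 1) / (2 * n + k + 2)) ^ 3 := by
  rw [kernel, kernel, Nat.cast_succ, beta_add_one_right (by positivity) (by positivity)]
  ring

lemma abs_kernel_le (n k : ℕ) : |kernel n k| ≤ (1 / 2) ^ n * (1 / ((k : ℝ) + 1) ^ 3) := by
  have hpos : 0 < beta (2 * n + 1) (k + 1) := beta_pos (by positivity) (by positivity)
  have hle : beta (2 * n + 1) (k + 1) ≤ 1 / ((k : ℝ) + 1) := by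
    exact_mod_cast beta_natCast_add_one_le (2 * n) k.cast_add_one_pos
  rw [kernel, abs_mul, abs_of_pos (pow_pos hpos 3), ← one_div_pow]
  gcongr
  exact abs_weight_le n

/-- The rational function `A` for which `(kernel, A · kernel)` is a Wilf–Zeilberger pair. -/
noncomputable def kernelCert (x y : ℝ) : ℝ :=
  (4 * x + y + 2) / (2 * (3 * x + 1)) +
    (2 * x + 1) ^ 3 *
        (2 * (x + 1) ^ 2 + 3 * (x + 1) * (2 * x + y + 2) + 3 * (2 * x + y + 2) ^ 2) /
      (6 * (3 * x + 1) * (3 * x + 2) * (2 * x + y + 2) ^ 3)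

lemma kernelCert_telescope {x y : ℝ} (hx : 0 ≤ x) (hy : 0 ≤ y) :
    -(x + 1) ^ 2 / (3 * (3 * x + 1) * (3 * x + 2)) *
        ((2 * x + 1) * (2 * x + 2) / ((2 * x + y + 2) * (2 * x + y + 3))) ^ 3 - 1 =
      ((y + 1) / (2 * x + y + 2)) ^ 3 * kernelCert x (y + 1) - kernelCert x y := by
  have hshift : 2 * x + (y + 1) + 2 = 2 * x + y + 3 := by ring
  rw [kernelCert, kernelCert, hshift]
  field_simp
  ring

lemma isWZPair_kernel : IsWZPair kernel fun n k => kernelCert n k * kernel n k := by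
  intro n k
  dsimp only
  rw [kernel_succ_left, kernel_succ_right, Nat.cast_succ]
  linear_combination kernel n k * kernelCert_telescope n.cast_nonneg k.cast_nonneg

lemma kernelCert_nonneg {x y : ℝ} (hx : 0 ≤ x) (hy : 0 ≤ y) : 0 ≤ kernelCert x y := by
  unfold kernelCert
  positivity

lemma kernelCert_le {x y : ℝ} (hx : 0 ≤ x) (hy : 0 ≤ y) : kernelCert x y ≤ 2 * (y + 1) := by
  rw [kernelCert]
  set u := 2 * x + y + 2
  have hu₀ : 0 < u := by positivity
  have hlinear : (4 * x + y + 2) / (2 * (3 * x + 1)) ≤ y + 1 := by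
    rw [div_le_iff₀ (by positivity)]
    nlinarith [mul_nonneg hx hy]
  have hcubic : (2 * x + 1) ^ 3 * (2 * (x + 1) ^ 2 + 3 * (x + 1) * u + 3 * u ^ 2) ≤
      6 * (3 * x + 1) * (3 * x + 2) * u ^ 3 :=
    calc (2 * x + 1) ^ 3 * (2 * (x + 1) ^ 2 + 3 * (x + 1) * u + 3 * u ^ 2)
        ≤ (2 * x + 1) ^ 2 * u * (2 * u ^ 2 + 3 * u * u + 3 * u ^ 2) := by
          rw [pow_succ (2 * x + 1) 2]
          gcongr <;> linarith
      _ = 8 * (2 * x + 1) ^ 2 * u ^ 3 := by ring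
      _ ≤ 6 * (3 * x + 1) * (3 * x + 2) * u ^ 3 := by
          gcongr ?_ * u ^ 3
          nlinarith
  linarith [div_le_one_of_le₀ hcubic (by positivity)]

/-- The harmonic factor `(H_{n+k+1} - H_n) - (H_{2n+k+1} - H_{2n})` multiplying the kernel. -/
noncomputable def harmonicFactor (n k : ℕ) : ℝ :=
  harmonicGap n (k + 1) - harmonicGap (2 * n) (k + 1)

lemma harmonicFactor_zero_left (k : ℕ) : harmonicFactor 0 k = 0 := by simp [harmonicFactor]

lemma harmonicFactor_zero_right (n : ℕ) :
    harmonicFactor n 0 = 1 / ((n : ℝ) + 1) - 1 / (2 * n + 1) := by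
  simp [harmonicFactor, harmonicGap_succ_right, harmonicGap_zero_right]

lemma harmonicFactor_succ_right (n k : ℕ) :
    harmonicFactor n (k + 1) =
      harmonicFactor n k + (1 / ((n : ℝ) + k + 2) - 1 / (2 * n + k + 2)) := by
  simp only [harmonicFactor, harmonicGap_succ_right _ (k + 1)]
  push_cast
  ring

lemma harmonicFactor_succ_left (n k : ℕ) :
    harmonicFactor (n + 1) k = harmonicFactor n k +
      (1 / ((n : ℝ) + k + 2) - 1 / (n + 1) - 1 / (2 * n + k + 2) - 1 / (2 * n + k + 3)
        + 1 / (2 * n + 1) + 1 / (2 * n + 2)) := by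
  rw [harmonicFactor, harmonicFactor, mul_add_one, harmonicGap_succ_left,
    harmonicGap_succ_left (2 * n + 1), harmonicGap_succ_left (2 * n)]
  push_cast
  ring

lemma abs_harmonicFactor_le (n k : ℕ) : |harmonicFactor n k| ≤ k + 1 := by
  rw [← Nat.cast_succ]
  exact abs_sub_le_of_nonneg_of_le (harmonicGap_nonneg _ _) (harmonicGap_le _ _)
    (harmonicGap_nonneg _ _) (harmonicGap_le _ _)

/-- The numerator of the pole part of `rationalCert`, in the variable `u = 2x + y + 2`. -/
noncomputable def rationalCertNum (x u : ℝ) : ℝ :=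
  3 * u ^ 3 + (1 - x) * u ^ 2 - (x + 1) * (4 * x + 1) * u - 2 * (x + 1) ^ 2 * (2 * x + 1)

/-- The rational function by which the second member of the pair has to be corrected once the kernel
is multiplied by `harmonicFactor`. -/
noncomputable def rationalCert (x y : ℝ) : ℝ :=
  (2 * x + 1) ^ 2 * rationalCertNum x (2 * x + y + 2) /
      (6 * (3 * x + 1) * (3 * x + 2) * (2 * x + y + 2) ^ 4) -
    1 / (6 * (3 * x + 1)) - 1 / (2 * (x + y + 1))

lemma rationalCert_telescope {x y : ℝ} (hx : 0 ≤ x) (hy : 0 ≤ y) :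
    -(x + 1) ^ 2 / (3 * (3 * x + 1) * (3 * x + 2)) *
        ((2 * x + 1) * (2 * x + 2) / ((2 * x + y + 2) * (2 * x + y + 3))) ^ 3 *
        (1 / (x + y + 2) - 1 / (x + 1) - 1 / (2 * x + y + 2) - 1 / (2 * x + y + 3)
          + 1 / (2 * x + 1) + 1 / (2 * x + 2) - 1 / (2 * (x + y + 2))) +
        1 / (2 * (x + y + 1)) =
      ((y + 1) / (2 * x + y + 2)) ^ 3 *
        (kernelCert x (y + 1) * (1 / (x + y + 2) - 1 / (2 * x + y + 2)) +
          rationalCert x (y + 1)) - rationalCert x y := by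
  have hshift : 2 * x + (y + 1) + 2 = 2 * x + y + 3 := by ring
  have hpole : x + (y + 1) + 1 = x + y + 2 := by ring
  have htwo : 2 * x + 2 = 2 * (x + 1) := by ring
  unfold kernelCert rationalCert rationalCertNum
  rw [hshift, hpole, htwo]
  field_simp
  ring

lemma abs_rationalCertNum_le {x u : ℝ} (hx : 0 ≤ x) (hxu : 2 * x + 1 ≤ u) :
    |rationalCertNum x u| ≤ 10 * u ^ 3 := by
  have hu : 0 < u := by linarith
  have hxu' : x + 1 ≤ u := by linarith
  have hquadratic : |(1 - x) * u ^ 2| ≤ u * u ^ 2 := by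
    rw [abs_mul, abs_of_pos (pow_pos hu 2)]
    gcongr
    exact abs_le.2 ⟨by linarith, by linarith⟩
  have hlinear : (x + 1) * (4 * x + 1) * u ≤ u * (4 * u) * u := by
    gcongr
    linarith
  have hconst : 2 * (x + 1) ^ 2 * (2 * x + 1) ≤ 2 * u ^ 2 * u := by gcongr
  have hlinear₀ : 0 ≤ (x + 1) * (4 * x + 1) * u := by positivity
  have hconst₀ : 0 ≤ 2 * (x + 1) ^ 2 * (2 * x + 1) := by positivity
  have hcube : 0 < u ^ 3 := by positivity
  obtain ⟨hlower, hupper⟩ := abs_le.1 hquadratic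
  rw [rationalCertNum]
  exact abs_le.2 ⟨by linarith, by linarith⟩

lemma abs_rationalCert_le {x y : ℝ} (hx : 0 ≤ x) (hy : 0 ≤ y) : |rationalCert x y| ≤ 2 := by
  rw [rationalCert]
  set u := 2 * x + y + 2
  have hu₀ : 0 < u := by positivity
  have hxu : 2 * x + 1 ≤ u := by linarith
  have hpoles : |(2 * x + 1) ^ 2 * rationalCertNum x u /
      (6 * (3 * x + 1) * (3 * x + 2) * u ^ 4)| ≤ 1 := by
    have hden : 0 ≤ 6 * (3 * x + 1) * (3 * x + 2) * u ^ 4 := by positivity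
    rw [abs_div, abs_mul, abs_of_nonneg (sq_nonneg (2 * x + 1)), abs_of_nonneg hden]
    refine div_le_one_of_le₀ ?_ hden
    calc (2 * x + 1) ^ 2 * |rationalCertNum x u| ≤ (2 * x + 1) * u * (10 * u ^ 3) := by
          rw [sq (2 * x + 1)]
          gcongr
          exact abs_rationalCertNum_le hx hxu
      _ = 10 * (2 * x + 1) * u ^ 4 := by ring
      _ ≤ 6 * (3 * x + 1) * (3 * x + 2) * u ^ 4 := by
          gcongr ?_ * u ^ 4
          nlinarith
  have hconst : 1 / (6 * (3 * x + 1)) ≤ 1 / 2 := by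
    gcongr
    linarith
  have hlast : 1 / (2 * (x + y + 1)) ≤ 1 / 2 := by
    gcongr
    linarith
  have hconst₀ : 0 ≤ 1 / (6 * (3 * x + 1)) := by positivity
  have hlast₀ : 0 ≤ 1 / (2 * (x + y + 1)) := by positivity
  obtain ⟨hlower, hupper⟩ := abs_le.1 hpoles
  exact abs_le.2 ⟨by linarith, by linarith⟩

/-- The first member of the pair whose sum along `n = 0` is a multiple of `ζ(4)`. -/
noncomputable def wzF (n k : ℕ) : ℝ :=
  kernel n k * harmonicFactor n k + -1 / (2 * (n + k + 1)) * kernel n k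

/-- The companion of `wzF`, whose values along `k = 0` are the terms of the series, up to a constant
factor. -/
noncomputable def wzG (n k : ℕ) : ℝ :=
  kernelCert n k * kernel n k * harmonicFactor n k + rationalCert n k * kernel n k

lemma isWZPair_wzF_wzG : IsWZPair wzF wzG := isWZPair_kernel.mul_add fun n k => by
  rw [kernel_succ_left, kernel_succ_right, harmonicFactor_succ_left, harmonicFactor_succ_right]
  push_cast
  have hpole : (n : ℝ) + 1 + k + 1 = n + k + 2 := by ring
  rw [hpole]
  linear_combination kernel n k * rationalCert_telescope n.cast_nonneg k.cast_nonneg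

lemma abs_wzF_le (n k : ℕ) : |wzF n k| ≤ (1 / 2) ^ n * (2 * (1 / ((k : ℝ) + 1) ^ 2)) := by
  have hfactor : |harmonicFactor n k - 1 / (2 * ((n : ℝ) + k + 1))| ≤ 2 * ((k : ℝ) + 1) := by
    have hpole : |1 / (2 * ((n : ℝ) + k + 1))| ≤ 1 := by
      rw [abs_of_nonneg (by positivity)]
      exact div_le_one_of_le₀ (by linarith [n.cast_nonneg (α := ℝ), k.cast_nonneg (α := ℝ)])
        (by positivity)
    linarith [abs_sub (harmonicFactor n k) (1 / (2 * ((n : ℝ) + k + 1))),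
      abs_harmonicFactor_le n k, k.cast_nonneg (α := ℝ)]
  calc |wzF n k| = |kernel n k| * |harmonicFactor n k - 1 / (2 * ((n : ℝ) + k + 1))| := by
        rw [wzF, ← abs_mul]
        ring_nf
    _ ≤ (1 / 2) ^ n * (1 / ((k : ℝ) + 1) ^ 3) * (2 * ((k : ℝ) + 1)) := by
        gcongr
        exact abs_kernel_le n k
    _ = (1 / 2) ^ n * (2 * (1 / ((k : ℝ) + 1) ^ 2)) := by field_simp

lemma summable_wzF : Summable fun p : ℕ × ℕ => wzF p.1 p.2 := by
  have hsq : Summable fun k : ℕ => 1 / ((k : ℝ) + 1) ^ 2 := by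
    exact_mod_cast (summable_nat_add_iff 1).2 (Real.summable_one_div_nat_pow.2 one_lt_two)
  exact .of_norm_bounded (summable_geometric_two.mul_of_nonneg (hsq.mul_left 2)
    (fun n => by positivity) fun k => by positivity) fun p => abs_wzF_le p.1 p.2

lemma abs_wzG_le (n k : ℕ) : |wzG n k| ≤ 4 * (1 / ((k : ℝ) + 1)) := by
  have hcert : |kernelCert n k * harmonicFactor n k + rationalCert n k| ≤
      2 * ((k : ℝ) + 1) * (k + 1) + 2 := by
    refine (abs_add_le _ _).trans (add_le_add ?_ (abs_rationalCert_le n.cast_nonneg k.cast_nonneg))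
    rw [abs_mul, abs_of_nonneg (kernelCert_nonneg n.cast_nonneg k.cast_nonneg)]
    gcongr
    · exact kernelCert_le n.cast_nonneg k.cast_nonneg
    · exact abs_harmonicFactor_le n k
  have hkernel : |kernel n k| ≤ 1 / ((k : ℝ) + 1) ^ 3 :=
    (abs_kernel_le n k).trans <| mul_le_of_le_one_left (by positivity) <|
      pow_le_one₀ (by norm_num) (by norm_num)
  calc |wzG n k| = |kernel n k| * |kernelCert n k * harmonicFactor n k + rationalCert n k| := by
        rw [wzG, ← abs_mul]
        ring_nf
    _ ≤ 1 / ((k : ℝ) + 1) ^ 3 * (4 * ((k : ℝ) + 1) ^ 2) := by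
        gcongr
        nlinarith [k.cast_nonneg (α := ℝ)]
    _ = 4 * (1 / ((k : ℝ) + 1)) := by field_simp

lemma tendsto_wzG (n : ℕ) : Tendsto (wzG n) atTop (𝓝 0) :=
  squeeze_zero_norm (abs_wzG_le n) <| by
    simpa using tendsto_one_div_add_atTop_nhds_zero_nat.const_mul (4 : ℝ)

lemma tsum_wzF_zero : ∑' k, wzF 0 k = -Real.pi ^ 4 / 180 := by
  have hterm (k : ℕ) : wzF 0 k = -1 / 2 * (1 / ((k + 1 : ℕ) : ℝ) ^ 4) := by
    rw [wzF, kernel_zero_left, harmonicFactor_zero_left]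
    push_cast
    field_simp
    ring
  have hzeta := (hasSum_nat_add_iff' 1).2 hasSum_zeta_four
  rw [tsum_congr hterm, tsum_mul_left, hzeta.tsum_eq, Finset.sum_range_one]
  norm_num
  ring

lemma hasSum_wzG_zero : HasSum (fun n => wzG n 0) (-Real.pi ^ 4 / 180) :=
  tsum_wzF_zero ▸ isWZPair_wzF_wzG.hasSum summable_wzF tendsto_wzG

lemma four_mul_wzG_zero (n : ℕ) :
    4 * wzG n 0 = weight (n + 1) *
      ((3 - 18 * ((n : ℝ) + 1) + 28 * ((n : ℝ) + 1) ^ 2) /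
        (((n : ℝ) + 1) ^ 4 * (2 * ((n : ℝ) + 1) - 1) ^ 3)) := by
  have hodd : 2 * ((n : ℝ) + 1) - 1 = 2 * n + 1 := by ring
  have hbeta : beta (2 * n + 1) ((0 : ℕ) + 1) = 1 / (2 * (n : ℝ) + 1) := by
    rw [Nat.cast_zero, zero_add, beta_comm, beta_one_left (by positivity)]
  rw [wzG, kernel, hbeta, harmonicFactor_zero_right, weight_succ, hodd]
  simp only [kernelCert, rationalCert, rationalCertNum, Nat.cast_zero, add_zero]
  field_simp
  ring

end PiFourSeries

/-- `∑_{n≥1} (−1/27)^n (1)ₙ²/((1/3)ₙ(2/3)ₙ) (3−18n+28n²)/(n⁴(2n−1)³) = −π⁴/45`. -/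
theorem pi4_45_series :
    ∑' n : ℕ, ((-1 / 27 : ℝ) ^ (n + 1) * (risingFactorial 1 (n + 1)) ^ 2 /
        (risingFactorial (1 / 3) (n + 1) * risingFactorial (2 / 3) (n + 1)) *
        ((3 - 18 * ((n : ℝ) + 1) + 28 * ((n : ℝ) + 1) ^ 2) /
          (((n : ℝ) + 1) ^ 4 * (2 * ((n : ℝ) + 1) - 1) ^ 3)))
      = -Real.pi ^ 4 / 45 := by
  refine (tsum_congr fun n => (PiFourSeries.four_mul_wzG_zero n).symm).trans ?_
  rw [tsum_mul_left, PiFourSeries.hasSum_wzG_zero.tsum_eq]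
  ring
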